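/- arXiv:1405.4453 — 2 statements merged into one kernel-verified Lean document; each statement's English description precedes it below -/
import Mathlib

section
/- Let (R, 𝔪, k) be a commutative noetherian Cohen–Macaulay local ring of Krull dimension d. Then R is Gorenstein (equivalently, Ext_R^{d+1}(k, R) = 0) if and only if the R-module Ext_R^{d+1}(k, R) has finite projective dimension. -/
open CategoryTheory

universe u

/-- `ProjDimLE R n M` : `M` admits a resolution of length `n` by finitely generated free
`R`-modules ending in a finitely generated projective module. -/
def ProjDimLE (R : Type u) [CommRing R] : ℕ → ∀ (M : Type u) [AddCommGroup M] [Module R M], Prop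
  | 0, M, _, _ => Module.Projective R M ∧ Module.Finite R M
  | n + 1, M, _, _ => ∃ (k : ℕ) (f : (Fin k → R) →ₗ[R] M),
      Function.Surjective f ∧ ProjDimLE R n (LinearMap.ker f)

/-- `M` admits a finite resolution by finitely generated projective `R`-modules. -/
def HasFiniteProjDim (R : Type u) [CommRing R] (M : Type u) [AddCommGroup M] [Module R M] :
    Prop :=
  ∃ n, ProjDimLE R n M

/-- The Ext module `Ext_R^n(M, N)` of `R`-modules. -/
noncomputable def ExtMod (R : Type u) [CommRing R] (n : ℕ) (M N : Type u)
    [AddCommGroup M] [Module R M] [AddCommGroup N] [Module R N] : ModuleCat R :=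
  ((Ext R (ModuleCat R) n).obj (Opposite.op (ModuleCat.of R M))).obj (ModuleCat.of R N)

/-!
Let `k` be the residue field and `V = Ext^{n+1}(k, N)` with `n ≥ dim R`. Since the maximal ideal
kills `V`, if `V ≠ 0` then `k` is a direct summand of `V`, and finiteness of `pd V` gives
`pd k < ∞`. It remains to see that then `pd k ≤ dim R`, so that `V = 0` after all.

If `pd k < ∞`, then `pd k ≤ pd M + dim M` for every nonzero finitely generated `M`: dividing `M` by
a regular element of the maximal ideal raises `pd M` by one and lowers `dim M` by one, and if there
is no such element, then `k` embeds into `M`; as no finitely generated module has projective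
dimension larger than `pd k`, the sequence `0 → k → M → M/k → 0` forces `pd k ≤ pd M`.
-/

open Module IsLocalRing

section Abelian

variable {C : Type*} [Category* C] [Abelian C] {S : ShortComplex C}

theorem projectiveDimension_X₂_le (hS : S.ShortExact) {a : WithBot ℕ∞}
    (h₁ : projectiveDimension S.X₁ ≤ a) (h₃ : projectiveDimension S.X₃ ≤ a) :
    projectiveDimension S.X₂ ≤ a :=
  sInf_le fun n hn ↦ hS.hasProjectiveDimensionLT_X₂ n
    (projectiveDimension_lt_iff.1 (h₁.trans_lt hn)) (projectiveDimension_lt_iff.1 (h₃.trans_lt hn))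

theorem projectiveDimension_X₁_le_projectiveDimension_X₂ (hS : S.ShortExact)
    (h₁ : projectiveDimension S.X₁ ≠ ⊤)
    (h₃ : projectiveDimension S.X₃ ≤ projectiveDimension S.X₁) :
    projectiveDimension S.X₁ ≤ projectiveDimension S.X₂ := by
  by_contra! h
  obtain ⟨n, hn⟩ : ∃ n : ℕ, projectiveDimension S.X₁ = n := by
    obtain ⟨a, ha⟩ := WithBot.ne_bot_iff_exists.1 (bot_le.trans_lt h).ne'
    lift a to ℕ using fun ht ↦ h₁ (by rw [← ha, ht]; rfl)
    exact ⟨a, ha.symm⟩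
  have h₂ : HasProjectiveDimensionLT S.X₂ n := projectiveDimension_lt_iff.1 (hn ▸ h)
  have h₃ : HasProjectiveDimensionLT S.X₃ (n + 1) := (projectiveDimension_le_iff _ n).1 (hn ▸ h₃)
  exact (projectiveDimension_lt_iff.2 (hS.hasProjectiveDimensionLT_X₁ n h₂ h₃)).ne hn

end Abelian

section Noetherian

variable {R : Type u} [CommRing R] [IsNoetherianRing R]

theorem projectiveDimension_le_of_forall_quotient_prime (M : Type u) [AddCommGroup M] [Module R M]
    [Module.Finite R M] (a : WithBot ℕ∞)
    (h : ∀ p : Ideal R, p.IsPrime → annihilator R M ≤ p →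
      projectiveDimension (ModuleCat.of R (R ⧸ p)) ≤ a) :
    projectiveDimension (ModuleCat.of R M) ≤ a := by
  -- The annihilator only grows along subquotients, so only the bound `I ≤ annihilator` is inductive.
  generalize hI : annihilator R M = I at h
  replace hI : I ≤ annihilator R M := hI.ge
  induction ‹Module.Finite R M› using
    IsNoetherianRing.induction_on_isQuotientEquivQuotientPrime R with
  | subsingleton N =>
    rw [(projectiveDimension_eq_bot_iff _).2 (ModuleCat.isZero_of_subsingleton _)]
    exact bot_le
  | quotient N p e =>
    rw [ModuleCat.projectiveDimension_eq_of_linearEquiv (N := ModuleCat.of R (R ⧸ p.1)) e]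
    exact h p.1 p.2 (by rwa [e.annihilator_eq, Ideal.annihilator_quotient] at hI)
  | exact N₁ N₂ N₃ f g hf hg hfg ih₁ ih₃ =>
    exact projectiveDimension_X₂_le
      (ModuleCat.shortComplex_shortExact
        (ModuleCat.shortComplexOfCompEqZero f g hfg.linearMap_comp_eq_zero) hfg hf hg)
      (ih₁ (hI.trans (f.annihilator_le_of_injective hf)))
      (ih₃ (hI.trans (g.annihilator_le_of_surjective hg)))

end Noetherian

section ResidueField

variable {R : Type u} [CommRing R] [IsLocalRing R]

theorem annihilator_residueField : annihilator R (ResidueField R) = maximalIdeal R :=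
  Ideal.annihilator_quotient

theorem nonempty_retract_residueField (V : Type u) [AddCommGroup V] [Module R V] [Nontrivial V]
    (hV : maximalIdeal R ≤ annihilator R V) :
    Nonempty (Retract (ModuleCat.of R (ResidueField R)) (ModuleCat.of R V)) := by
  have ht : IsTorsionBySet R V (maximalIdeal R : Set R) :=
    fun v r ↦ mem_annihilator.1 (hV r.2) v
  let : Module (ResidueField R) V := ht.module
  have : IsScalarTower R (ResidueField R) V := ht.isScalarTower
  obtain ⟨v, hv⟩ := exists_ne (0 : V)
  obtain ⟨p, hp⟩ := (LinearMap.toSpanSingleton (ResidueField R) V v).exists_leftInverse_of_injective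
    (LinearMap.ker_toSpanSingleton _ hv)
  refine ⟨⟨ModuleCat.ofHom ((LinearMap.toSpanSingleton _ V v).restrictScalars R),
    ModuleCat.ofHom (p.restrictScalars R), ?_⟩⟩
  ext x
  exact LinearMap.congr_fun hp x

variable [IsNoetherianRing R]

theorem projectiveDimension_quotient_prime_le_projectiveDimension_residueField (p : Ideal R)
    (hp : p.IsPrime) :
    projectiveDimension (ModuleCat.of R (R ⧸ p)) ≤
      projectiveDimension (ModuleCat.of R (ResidueField R)) := by
  induction p using WellFoundedGT.induction with
  | ind p ih =>
  by_cases hpm : p = maximalIdeal R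
  · exact hpm ▸ le_rfl
  obtain ⟨x, hx, hxp⟩ := SetLike.exists_of_lt ((le_maximalIdeal hp.ne_top).lt_of_ne hpm)
  have hreg : IsSMulRegular (R ⧸ p) x :=
    (isSMulRegular_quotient_iff_mem_of_smul_mem p x).2 fun y hy ↦
      (hp.mem_or_mem hy).resolve_left hxp
  have hann : p ≤ annihilator R (QuotSMulTop x (R ⧸ p)) :=
    (Ideal.annihilator_quotient (I := p)).ge.trans
      (LinearMap.annihilator_le_of_surjective _ (Submodule.mkQ_surjective _))
  have hquot : projectiveDimension (ModuleCat.of R (QuotSMulTop x (R ⧸ p))) ≤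
      projectiveDimension (ModuleCat.of R (ResidueField R)) :=
    projectiveDimension_le_of_forall_quotient_prime _ _ fun q hq hle ↦
      ih q (SetLike.lt_iff_le_and_exists.2
        ⟨hann.trans hle, x, hle (QuotSMulTop.mem_annihilator (R ⧸ p) x), hxp⟩) hq
  rw [ModuleCat.projectiveDimension_quotSMulTop_eq_succ_of_isSMulRegular
    (ModuleCat.of R (R ⧸ p)) x hreg hx] at hquot
  exact (le_add_of_nonneg_right zero_le_one).trans hquot

theorem projectiveDimension_le_projectiveDimension_residueField (M : Type u) [AddCommGroup M]
    [Module R M] [Module.Finite R M] :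
    projectiveDimension (ModuleCat.of R M) ≤
      projectiveDimension (ModuleCat.of R (ResidueField R)) :=
  projectiveDimension_le_of_forall_quotient_prime M _ fun p hp _ ↦
    projectiveDimension_quotient_prime_le_projectiveDimension_residueField p hp

theorem exists_injective_residueField_of_forall_not_isSMulRegular (M : Type*) [AddCommGroup M]
    [Module R M] [Module.Finite R M] (h : ∀ x ∈ maximalIdeal R, ¬ IsSMulRegular M x) :
    ∃ f : ResidueField R →ₗ[R] M, Function.Injective f := by
  have : Module.Finite R (ResidueField R) := inferInstanceAs (Module.Finite R (R ⧸ maximalIdeal R))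
  have : Nontrivial (ResidueField R →ₗ[R] M) := by
    by_contra! hs
    obtain ⟨x, hx, hreg⟩ := IsSMulRegular.subsingleton_linearMap_iff.1 hs
    exact h x (annihilator_residueField (R := R) ▸ hx) hreg
  obtain ⟨f, hf⟩ := exists_ne (0 : ResidueField R →ₗ[R] M)
  have : IsSimpleModule R (ResidueField R) :=
    isSimpleModule_iff_isCoatom.2 (maximalIdeal.isMaximal R).out
  exact ⟨f, f.injective_of_ne_zero hf⟩

theorem projectiveDimension_residueField_le_of_injective
    (hk : projectiveDimension (ModuleCat.of R (ResidueField R)) ≠ ⊤) {M : Type u} [AddCommGroup M]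
    [Module R M] [Module.Finite R M] (f : ResidueField R →ₗ[R] M) (hf : Function.Injective f) :
    projectiveDimension (ModuleCat.of R (ResidueField R)) ≤
      projectiveDimension (ModuleCat.of R M) :=
  have hfg := LinearMap.exact_map_mkQ_range f
  projectiveDimension_X₁_le_projectiveDimension_X₂
    (ModuleCat.shortComplex_shortExact
      (ModuleCat.shortComplexOfCompEqZero f f.range.mkQ hfg.linearMap_comp_eq_zero) hfg hf
      (Submodule.mkQ_surjective _))
    hk (projectiveDimension_le_projectiveDimension_residueField (M ⧸ f.range))

theorem projectiveDimension_residueField_le_add_of_supportDim_le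
    (hk : projectiveDimension (ModuleCat.of R (ResidueField R)) ≠ ⊤) (M : Type u) [AddCommGroup M]
    [Module R M] [Module.Finite R M] [Nontrivial M] (n : ℕ) (hn : supportDim R M ≤ n) :
    projectiveDimension (ModuleCat.of R (ResidueField R)) ≤
      projectiveDimension (ModuleCat.of R M) + n := by
  by_cases! h : ∀ x ∈ maximalIdeal R, ¬ IsSMulRegular M x
  · obtain ⟨f, hf⟩ := exists_injective_residueField_of_forall_not_isSMulRegular M h
    exact (projectiveDimension_residueField_le_of_injective hk f hf).trans
      (le_add_of_nonneg_right n.cast_nonneg)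
  obtain ⟨x, hx, hreg⟩ := h
  have := nontrivial_quotSMulTop_of_mem_maximalIdeal M hx
  rw [← supportDim_quotSMulTop_succ_eq_supportDim hreg hx] at hn
  cases n with
  | zero =>
    exact absurd ((ENat.WithBot.add_one_le_zero_iff _).1 hn) (supportDim_ne_bot_of_nontrivial R _)
  | succ n =>
    have hquot := projectiveDimension_residueField_le_add_of_supportDim_le hk (QuotSMulTop x M) n
      (ENat.WithBot.add_le_add_one_right_iff.1 (by exact_mod_cast hn))
    rwa [ModuleCat.projectiveDimension_quotSMulTop_eq_succ_of_isSMulRegular (ModuleCat.of R M) x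
      hreg hx, add_assoc, add_comm 1, ← Nat.cast_succ] at hquot

theorem projectiveDimension_residueField_le_of_ringKrullDim_le
    (hk : projectiveDimension (ModuleCat.of R (ResidueField R)) ≠ ⊤) (n : ℕ)
    (hn : ringKrullDim R ≤ n) :
    projectiveDimension (ModuleCat.of R (ResidueField R)) ≤ n := by
  simpa [ModuleCat.projectiveDimension_eq_zero_of_projective (ModuleCat.of R R)] using
    projectiveDimension_residueField_le_add_of_supportDim_le hk R n
      ((supportDim_self_eq_ringKrullDim R).trans_le hn)

end ResidueField

section ExtComparison

variable {R : Type*} [Ring R]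

section

variable {C : Type*} [Category* C] [Abelian C] [Linear R C] [HasExt C]

theorem smul_ext_eq_zero {r : R} {X Y : C} {n : ℕ} (hr : r • 𝟙 X = 0) (α : Abelian.Ext X Y n) :
    r • α = 0 := by
  rw [← Abelian.Ext.mk₀_id_comp α, ← Abelian.Ext.smul_comp, ← Abelian.Ext.mk₀_smul, hr,
    Abelian.Ext.mk₀_zero, Abelian.Ext.zero_comp]

variable {X : C} (P : ProjectiveResolution X)

theorem smul_extMk {Y : C} {n m : ℕ} (r : R) (f : P.complex.X n ⟶ Y) (hm : n + 1 = m)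
    (hf : P.complex.d m n ≫ f = 0) :
    r • P.extMk f m hm hf = P.extMk (r • f) m hm (by simp [hf]) := by
  simp [Abelian.Ext.smul_eq_comp_mk₀, P.extMk_comp_mk₀]

variable (R) in
/-- The linear map sending an `n`-cocycle of `Hom(P, Y)`, where `P` is a projective resolution of
`X`, to the class in `Ext X Y n` that it represents. -/
noncomputable def extMkLinearMap (Y : C) (n : ℕ) :
    (Linear.leftComp R Y (P.complex.d (n + 1) n)).ker →ₗ[R] Abelian.Ext X Y n where
  toFun f := P.extMk f.1 (n + 1) rfl f.2
  map_add' f g := (P.add_extMk f.1 g.1 (n + 1) rfl f.2 g.2).symm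
  map_smul' r f := (smul_extMk P r f.1 rfl f.2).symm

theorem extMkLinearMap_surjective (Y : C) (n : ℕ) :
    Function.Surjective (extMkLinearMap R P Y n) := by
  intro α
  obtain ⟨f, hf, rfl⟩ := P.extMk_surjective α (n + 1) rfl
  exact ⟨⟨f, hf⟩, rfl⟩

variable (R) in
/-- The differential of `Hom(P, Y)` from degree `n` to degree `n + 1`, with codomain restricted to
the cocycles. -/
noncomputable def toCocycles (Y : C) (n : ℕ) :
    (P.complex.X n ⟶ Y) →ₗ[R] (Linear.leftComp R Y (P.complex.d (n + 2) (n + 1))).ker :=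
  (Linear.leftComp R Y (P.complex.d (n + 1) n)).codRestrict _ fun f ↦ by simp

theorem ker_extMkLinearMap_succ (Y : C) (n : ℕ) :
    (extMkLinearMap R P Y (n + 1)).ker = (toCocycles R P Y n).range := by
  ext f
  rw [LinearMap.mem_ker, LinearMap.mem_range]
  simp only [Subtype.ext_iff]
  exact P.extMk_eq_zero_iff f.1 (n + 2) rfl f.2 n rfl

end

universe v w

variable {C : Type w} [Category.{v} C] [Abelian C] [Linear R C] [EnoughProjectives C] [HasExt C]

variable (R) in
/-- In positive degrees, the left derived functors of `Hom(-, Y)` agree with the `Ext` groups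
defined through the derived category. -/
noncomputable def extSuccLinearEquiv (X Y : C) (n : ℕ) :
    ((Ext R C (n + 1)).obj (Opposite.op X)).obj Y ≃ₗ[R] Abelian.Ext X Y (n + 1) :=
  let P := projectiveResolution X
  let K := P.complex.linearYonedaObj R Y
  let e : ((Ext R C (n + 1)).obj (Opposite.op X)).obj Y ≃ₗ[R]
      _ ⧸ (toCocycles R P Y n).range :=
    (P.isoExt (n + 1) Y ≪≫ K.homologyIsoSc' n (n + 1) (n + 2) (by simp) (by simp) ≪≫
      (K.sc' n (n + 1) (n + 2)).moduleCatHomologyIso).toLinearEquiv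
  e ≪≫ₗ Submodule.quotEquivOfEq _ _ (ker_extMkLinearMap_succ P Y n).symm ≪≫ₗ
    (extMkLinearMap R P Y (n + 1)).quotKerEquivOfSurjective (extMkLinearMap_surjective P Y _)

end ExtComparison

section ExtMod

variable {R : Type u} [CommRing R]

theorem annihilator_le_annihilator_extMod_succ (M N : Type u) [AddCommGroup M] [Module R M]
    [AddCommGroup N] [Module R N] (n : ℕ) :
    annihilator R M ≤ annihilator R (ExtMod R (n + 1) M N) := by
  rw [ExtMod, (extSuccLinearEquiv R (ModuleCat.of R M) (ModuleCat.of R N) n).annihilator_eq]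
  intro r hr
  refine mem_annihilator.2 (smul_ext_eq_zero ?_)
  ext m
  exact mem_annihilator.1 hr m

theorem subsingleton_extMod_succ_of_projectiveDimension_le (M N : Type u) [AddCommGroup M]
    [Module R M] [AddCommGroup N] [Module R N] (n : ℕ)
    (h : projectiveDimension (ModuleCat.of R M) ≤ n) : Subsingleton (ExtMod R (n + 1) M N) := by
  have := (projectiveDimension_le_iff _ _).1 h
  have := HasProjectiveDimensionLT.subsingleton (ModuleCat.of R M) (n + 1) (n + 1) le_rfl
    (ModuleCat.of R N)
  exact (extSuccLinearEquiv R (ModuleCat.of R M) (ModuleCat.of R N) n).subsingleton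

theorem projectiveDimension_le_of_projDimLE {n : ℕ} {M : Type u} [AddCommGroup M] [Module R M]
    (h : ProjDimLE R n M) : projectiveDimension (ModuleCat.of R M) ≤ n := by
  rw [projectiveDimension_le_iff]
  induction n generalizing M with
  | zero =>
    rw [HasProjectiveDimensionLE, zero_add, ← projective_iff_hasProjectiveDimensionLT_one]
    exact (IsProjective.iff_projective (R := R) M).1 h.1
  | succ n ih =>
    obtain ⟨k, f, hf, h⟩ := h
    exact ((LinearMap.shortExact_shortComplexKer hf).hasProjectiveDimensionLT_X₃_iff n
      (inferInstanceAs (Projective (ModuleCat.of R (Fin k → R))))).2 (ih h)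

theorem HasFiniteProjDim.projectiveDimension_ne_top {M : Type u} [AddCommGroup M] [Module R M]
    (h : HasFiniteProjDim R M) : projectiveDimension (ModuleCat.of R M) ≠ ⊤ :=
  have ⟨n, hn⟩ := h
  ((projectiveDimension_le_of_projDimLE hn).trans_lt
    (WithBot.coe_lt_coe.2 (ENat.natCast_lt_top n))).ne

theorem HasFiniteProjDim.of_subsingleton (M : Type u) [AddCommGroup M] [Module R M]
    [Subsingleton M] : HasFiniteProjDim R M :=
  ⟨0, inferInstance, inferInstance⟩

end ExtMod

theorem gorenstein_iff_ext_finiteProjDim_general (R : Type u) [CommRing R] [IsNoetherianRing R]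
    [IsLocalRing R] (N : Type u) [AddCommGroup N] [Module R N] (n : ℕ) (hn : ringKrullDim R ≤ n) :
    Subsingleton (ExtMod R (n + 1) (ResidueField R) N) ↔
      HasFiniteProjDim R (ExtMod R (n + 1) (ResidueField R) N) := by
  refine ⟨fun _ ↦ .of_subsingleton _, fun h ↦ ?_⟩
  by_contra! hs
  have hann : maximalIdeal R ≤ annihilator R (ExtMod R (n + 1) (ResidueField R) N) :=
    annihilator_residueField.ge.trans (annihilator_le_annihilator_extMod_succ _ N n)
  obtain ⟨i⟩ := nonempty_retract_residueField _ hann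
  have hk : projectiveDimension (ModuleCat.of R (ResidueField R)) ≠ ⊤ :=
    ne_top_of_le_ne_top h.projectiveDimension_ne_top i.projectiveDimension_le
  exact not_subsingleton _ (subsingleton_extMod_succ_of_projectiveDimension_le _ N n
    (projectiveDimension_residueField_le_of_ringKrullDim_le hk n hn))

/-- Let `(R, 𝔪, k)` be a commutative noetherian Cohen–Macaulay local ring of Krull dimension
`d` (Cohen–Macaulayness is expressed by the vanishing `Ext_R^i(k, R) = 0` for all `i < d`,
i.e. `depth R = d = dim R`).  Then `R` is Gorenstein, equivalently `Ext_R^{d+1}(k, R) = 0`,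
if and only if the `R`-module `Ext_R^{d+1}(k, R)` has finite projective dimension. -/
theorem gorenstein_iff_ext_finiteProjDim (R : Type u) [CommRing R] [IsNoetherianRing R]
    [IsLocalRing R] (d : ℕ) (hdim : ringKrullDim R = d)
    (hCM : ∀ i < d, Subsingleton (ExtMod R i (IsLocalRing.ResidueField R) R)) :
    Subsingleton (ExtMod R (d + 1) (IsLocalRing.ResidueField R) R) ↔
      HasFiniteProjDim R (ExtMod R (d + 1) (IsLocalRing.ResidueField R) R) :=
  gorenstein_iff_ext_finiteProjDim_general R R d hdim.le
end

section
/- Let R be a commutative noetherian ring and let 0 → F → N →^f M → 0 be a short exact sequence of finitely generated R-modules with F finitely generated free, and suppose Ext_R^1(N, R) = 0. Choose finite free presentations P₁ →^{d} P₀ → M → 0 and Q₁ →^{e} Q₀ → N → 0, and set Tr M := coker(Hom_R(d, R) : P₀* → P₁*) and Tr N := coker(Hom_R(e, R) : Q₀* → Q₁*), where (−)* = Hom_R(−, R). Then there exist finitely generated free R-modules G and G′ and a short exact sequence 0 → Ext_R^1(M, R) → Tr M ⊕ G → Tr N ⊕ G′ → 0. -/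
open CategoryTheory

universe u

/-!
Write `Ext¹(M, R)` as the submodule of `Tr M` formed by the classes of functionals on `P₁` that
vanish on `ker d`; comparing lifts of `id_M` shows that it does not depend on the presentation.
Lifting `ι : F → N` to `s : F → Q₀` gives the presentation `Q₁ × F → Q₀ → M` of `M`, and restricting
functionals from `Q₁ × F` to `Q₁` maps its transpose onto `Tr N`. The kernel consists of the classes
of those `φ` whose restriction to `Q₁` factors through `Q₁ → Q₀`. Since `Ext¹(N, R) = 0`, this means
that `φ` vanishes on `ker (Q₁ → Q₀) × 0`, which is the kernel of `Q₁ × F → Q₀` because `ι` is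
injective; hence the kernel is `Ext¹(M, R)`. Finally, the given presentation of `M` and the
constructed one are compared as in Schanuel's lemma.
-/

section LinearMap

variable {R A B C A' B' C' : Type*} [CommRing R] [AddCommGroup A] [Module R A]
  [AddCommGroup B] [Module R B] [AddCommGroup C] [Module R C] [AddCommGroup A'] [Module R A']
  [AddCommGroup B'] [Module R B'] [AddCommGroup C'] [Module R C']

lemma exists_comp_eq_of_range_le_range [Module.Projective R C] (g : A →ₗ[R] B) (h : C →ₗ[R] B)
    (hgh : LinearMap.range h ≤ LinearMap.range g) : ∃ k : C →ₗ[R] A, g ∘ₗ k = h := by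
  obtain ⟨k, hk⟩ := Module.projective_lifting_property g.rangeRestrict
    (h.codRestrict _ fun x => hgh ⟨x, rfl⟩) g.surjective_rangeRestrict
  exact ⟨k, LinearMap.ext fun x => congrArg Subtype.val (LinearMap.congr_fun hk x)⟩

lemma exists_prod_equiv_of_range_eq [Module.Projective R A] [Module.Projective R B]
    {g : A →ₗ[R] C} {g' : B →ₗ[R] C} (h : LinearMap.range g = LinearMap.range g') :
    ∃ e : (A × B) ≃ₗ[R] (B × A),
      (g' ∘ₗ LinearMap.fst R B A) ∘ₗ e = g ∘ₗ LinearMap.fst R A B := by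
  -- compose the shears `(a, b) ↦ (a - k' b, b)` and `(a, b) ↦ (a, b + k a)`
  obtain ⟨k, hk⟩ := exists_comp_eq_of_range_le_range g' g h.le
  obtain ⟨k', hk'⟩ := exists_comp_eq_of_range_le_range g g' h.ge
  let shearA : (B × A) ≃ₗ[R] (B × A) := .skewProd (.refl R B) (.refl R A) (-k')
  let shearB : (A × B) ≃ₗ[R] (A × B) := .skewProd (.refl R A) (.refl R B) k
  refine ⟨.prodComm R A B ≪≫ₗ shearA ≪≫ₗ .prodComm R B A ≪≫ₗ shearB ≪≫ₗ .prodComm R A B, ?_⟩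
  ext x
  · simp [shearA, shearB, ← hk]
  · have hk'x : g (k' x) = g' x := LinearMap.congr_fun hk' x
    have hkk'x : g' (k (k' x)) = g' x := (LinearMap.congr_fun hk (k' x)).trans hk'x
    simp [shearA, shearB, hkk'x]

lemma range_prodMap_id {d : A →ₗ[R] B} {ε : B →ₗ[R] C} (hd : Function.Exact d ε)
    (P : Type*) [AddCommGroup P] [Module R P] :
    LinearMap.range (d.prodMap (LinearMap.id : P →ₗ[R] P)) =
      LinearMap.ker (ε ∘ₗ LinearMap.fst R B P) := by
  rw [LinearMap.range_prodMap, LinearMap.range_id, ← hd.linearMap_ker_eq, LinearMap.ker_comp,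
    Submodule.comap_fst]

lemma exact_coprod_comp {d : A →ₗ[R] B} {ε : B →ₗ[R] C} (hd : Function.Exact d ε)
    {s : A' →ₗ[R] B} {f : C →ₗ[R] C'} (hf : Function.Exact (ε ∘ₗ s) f) :
    Function.Exact (d.coprod s) (f ∘ₗ ε) := by
  refine LinearMap.exact_iff.2 ?_
  rw [LinearMap.ker_comp, hf.linearMap_ker_eq, LinearMap.range_comp, Submodule.comap_map_eq,
    hd.linearMap_ker_eq, LinearMap.range_coprod, sup_comm]

lemma shortExact_conj_linearEquiv {α : A →ₗ[R] B} {β : B →ₗ[R] C}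
    (hα : Function.Injective α) (hβ : Function.Surjective β)
    (hαβ : Function.Exact α β) (eA : A' ≃ₗ[R] A) (eB : B ≃ₗ[R] B') (eC : C ≃ₗ[R] C') :
    Function.Injective (eB.toLinearMap ∘ₗ α ∘ₗ eA.toLinearMap) ∧
      Function.Surjective (eC.toLinearMap ∘ₗ β ∘ₗ eB.symm.toLinearMap) ∧
      Function.Exact (eB.toLinearMap ∘ₗ α ∘ₗ eA.toLinearMap)
        (eC.toLinearMap ∘ₗ β ∘ₗ eB.symm.toLinearMap) := by
  refine ⟨eB.injective.comp (hα.comp eA.injective), eC.surjective.comp (hβ.comp eB.symm.surjective),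
    LinearEquiv.postcomp_exact_iff_exact.2 ?_⟩
  exact (LinearEquiv.conj_exact_iff_exact _ _ eB).2 (LinearEquiv.precomp_exact_iff_exact.2 hαβ)

lemma exists_linearEquiv_fin_fun (R A : Type*) [CommRing R] [AddCommGroup A] [Module R A]
    [Module.Free R A] [Module.Finite R A] : ∃ n : ℕ, Nonempty (A ≃ₗ[R] (Fin n → R)) :=
  ⟨_, ⟨((Module.Free.chooseBasis R A).reindex (Fintype.equivFin _)).equivFun⟩⟩

lemma exists_shortExact_prod_fin_fun [Module.Free R B'] [Module.Finite R B'] [Module.Free R C']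
    [Module.Finite R C'] {α : A →ₗ[R] B × B'} {β : B × B' →ₗ[R] C × C'}
    (hα : Function.Injective α) (hβ : Function.Surjective β) (hαβ : Function.Exact α β) :
    ∃ (m n : ℕ) (α' : A →ₗ[R] B × (Fin m → R)) (β' : B × (Fin m → R) →ₗ[R] C × (Fin n → R)),
      Function.Injective α' ∧ Function.Surjective β' ∧ Function.Exact α' β' := by
  obtain ⟨m, ⟨eB⟩⟩ := exists_linearEquiv_fin_fun R B'
  obtain ⟨n, ⟨eC⟩⟩ := exists_linearEquiv_fin_fun R C'
  exact ⟨m, n, _, _, shortExact_conj_linearEquiv hα hβ hαβ (.refl R A)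
    ((LinearEquiv.refl R B).prodCongr eB) ((LinearEquiv.refl R C).prodCongr eC)⟩

end LinearMap

section Transpose

variable {R P₀ P₁ P₀' P₁' P₀'' P₁'' M : Type*} [CommRing R]
  [AddCommGroup P₀] [Module R P₀] [AddCommGroup P₁] [Module R P₁]
  [AddCommGroup P₀'] [Module R P₀'] [AddCommGroup P₁'] [Module R P₁']
  [AddCommGroup P₀''] [Module R P₀''] [AddCommGroup P₁''] [Module R P₁'']
  [AddCommGroup M] [Module R M]

/-- The transpose `coker (d* : P₀* → P₁*)` of the module presented by `d : P₁ → P₀`. It is attached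
to the presentation, since it depends on the module only up to stable equivalence. -/
abbrev AuslanderTranspose (d : P₁ →ₗ[R] P₀) : Type _ :=
  Module.Dual R P₁ ⧸ LinearMap.range d.dualMap

namespace AuslanderTranspose

/-- The projection of `P₁*` onto the transpose. -/
abbrev mk (d : P₁ →ₗ[R] P₀) : Module.Dual R P₁ →ₗ[R] AuslanderTranspose d :=
  (LinearMap.range d.dualMap).mkQ

lemma mk_eq_mk_iff {d : P₁ →ₗ[R] P₀} {φ ψ : Module.Dual R P₁} :
    mk d φ = mk d ψ ↔ ∃ a : Module.Dual R P₀, a ∘ₗ d = φ - ψ :=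
  Submodule.Quotient.eq _

lemma mk_eq_zero_iff {d : P₁ →ₗ[R] P₀} {φ : Module.Dual R P₁} :
    mk d φ = 0 ↔ ∃ a : Module.Dual R P₀, a ∘ₗ d = φ :=
  Submodule.Quotient.mk_eq_zero _

/-- The contravariant action of a chain map `(f₁, f₀)` between presentations on transposes. -/
def map {d : P₁ →ₗ[R] P₀} {d' : P₁' →ₗ[R] P₀'} (f₁ : P₁ →ₗ[R] P₁') (f₀ : P₀ →ₗ[R] P₀')
    (h : d' ∘ₗ f₁ = f₀ ∘ₗ d) : AuslanderTranspose d' →ₗ[R] AuslanderTranspose d :=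
  Submodule.mapQ _ _ f₁.dualMap <| by
    rintro _ ⟨a, rfl⟩
    exact ⟨a ∘ₗ f₀, (congrArg (a ∘ₗ ·) h).symm⟩

lemma map_mk {d : P₁ →ₗ[R] P₀} {d' : P₁' →ₗ[R] P₀'} (f₁ : P₁ →ₗ[R] P₁') (f₀ : P₀ →ₗ[R] P₀')
    (h : d' ∘ₗ f₁ = f₀ ∘ₗ d) (φ : Module.Dual R P₁') :
    map f₁ f₀ h (mk d' φ) = mk d (φ ∘ₗ f₁) :=
  rfl

/-- The transpose of an isomorphism of presentations. -/
def congr {d : P₁ →ₗ[R] P₀} {d' : P₁' →ₗ[R] P₀'} (e₁ : P₁ ≃ₗ[R] P₁') (e₀ : P₀ ≃ₗ[R] P₀')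
    (h : d' ∘ₗ e₁ = e₀ ∘ₗ d) : AuslanderTranspose d' ≃ₗ[R] AuslanderTranspose d :=
  Submodule.Quotient.equiv _ _ e₁.dualMap <| by
    ext φ
    constructor
    · rintro ⟨_, ⟨a, rfl⟩, rfl⟩
      exact ⟨a ∘ₗ e₀, (congrArg (a ∘ₗ ·) h).symm⟩
    · rintro ⟨a, rfl⟩
      refine ⟨_, ⟨a ∘ₗ e₀.symm, rfl⟩, LinearMap.ext fun x => ?_⟩
      simpa using congrArg (a ∘ₗ e₀.symm.toLinearMap) (LinearMap.congr_fun h x)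

section Schanuel

/-- A module `P₁'` of zero relations contributes its dual to the transpose. -/
noncomputable def compFstEquiv (d : P₁ →ₗ[R] P₀) (P₁' : Type*) [AddCommGroup P₁'] [Module R P₁'] :
    AuslanderTranspose (d ∘ₗ LinearMap.fst R P₁ P₁') ≃ₗ[R]
      AuslanderTranspose d × Module.Dual R P₁' :=
  let restrict : Module.Dual R (P₁ × P₁') →ₗ[R] AuslanderTranspose d × Module.Dual R P₁' :=
    (mk d).prodMap LinearMap.id ∘ₗ (Module.dualProdDualEquivDual R P₁ P₁').symm
  have restrict_surjective : Function.Surjective restrict :=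
    ((Submodule.mkQ_surjective _).prodMap Function.surjective_id).comp (LinearEquiv.surjective _)
  have ker_restrict : LinearMap.range (d ∘ₗ LinearMap.fst R P₁ P₁').dualMap =
      LinearMap.ker restrict := by
    ext φ
    suffices (∃ a : Module.Dual R P₀, a ∘ₗ d ∘ₗ LinearMap.fst R P₁ P₁' = φ) ↔
        (∃ a : Module.Dual R P₀, a ∘ₗ d = φ ∘ₗ LinearMap.inl R P₁ P₁') ∧
          φ ∘ₗ LinearMap.inr R P₁ P₁' = 0 from
      this.trans ((and_congr_left' mk_eq_zero_iff.symm).trans Prod.mk_eq_zero.symm)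
    constructor
    · rintro ⟨a, rfl⟩
      exact ⟨⟨a, rfl⟩, by ext; simp⟩
    · rintro ⟨⟨a, ha⟩, hφ⟩
      refine ⟨a, LinearMap.prod_ext ?_ ?_⟩
      · exact ha
      · rw [hφ]
        ext
        simp
  (Submodule.quotEquivOfEq _ _ ker_restrict).trans
    (restrict.quotKerEquivOfSurjective restrict_surjective)

/-- Adding the same module to the generators and the relations does not change the transpose. -/
def prodMapIdEquiv (d : P₁ →ₗ[R] P₀) (A : Type*) [AddCommGroup A] [Module R A] :
    AuslanderTranspose (d.prodMap (LinearMap.id : A →ₗ[R] A)) ≃ₗ[R] AuslanderTranspose d :=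
  LinearEquiv.ofLinearMap
    (map (LinearMap.inl R P₁ A) (LinearMap.inl R P₀ A) (by ext <;> simp))
    (map (LinearMap.fst R P₁ A) (LinearMap.fst R P₀ A) rfl)
    (by ext t; rfl)
    (by
      ext φ
      refine mk_eq_mk_iff.2 ⟨-(φ ∘ₗ LinearMap.inr R P₁ A ∘ₗ LinearMap.snd R P₀ A), ?_⟩
      have φ_zero : φ (0, 0) = 0 := map_zero φ
      ext <;> simp [φ_zero])

lemma nonempty_prod_dual_equiv [Module.Projective R P₀] [Module.Projective R P₁]
    [Module.Projective R P₀'] [Module.Projective R P₁']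
    {d : P₁ →ₗ[R] P₀} {ε : P₀ →ₗ[R] M} {d' : P₁' →ₗ[R] P₀'} {ε' : P₀' →ₗ[R] M}
    (hd : Function.Exact d ε) (hε : Function.Surjective ε)
    (hd' : Function.Exact d' ε') (hε' : Function.Surjective ε') :
    Nonempty ((AuslanderTranspose d × Module.Dual R (P₁' × P₀)) ≃ₗ[R]
      (AuslanderTranspose d' × Module.Dual R (P₁ × P₀'))) := by
  let D := d.prodMap (LinearMap.id : P₀' →ₗ[R] P₀')
  let D' := d'.prodMap (LinearMap.id : P₀ →ₗ[R] P₀)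
  obtain ⟨e₀, he₀⟩ := exists_prod_equiv_of_range_eq (g := ε) (g' := ε')
    ((LinearMap.range_eq_top.2 hε).trans (LinearMap.range_eq_top.2 hε').symm)
  have range_eq : LinearMap.range (e₀.toLinearMap ∘ₗ D) = LinearMap.range D' := by
    rw [LinearMap.range_comp, range_prodMap_id hd P₀', range_prodMap_id hd' P₀, ← he₀,
      LinearMap.ker_comp e₀.toLinearMap, Submodule.map_comap_eq_of_surjective e₀.surjective]
  obtain ⟨e₁, he₁⟩ := exists_prod_equiv_of_range_eq range_eq
  exact ⟨((prodMapIdEquiv d P₀').prodCongr (.refl R _)).symm ≪≫ₗ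
    (compFstEquiv D (P₁' × P₀)).symm ≪≫ₗ (congr e₁ e₀ he₁).symm ≪≫ₗ
    compFstEquiv D' (P₁ × P₀') ≪≫ₗ (prodMapIdEquiv d' P₀).prodCongr (.refl R _)⟩

end Schanuel

section Ext

/-- The classes in the transpose of the functionals vanishing on `ker d`. If `d` is a projective
presentation of `M`, this is `Ext¹(M, R)`. -/
def extSubmodule (d : P₁ →ₗ[R] P₀) : Submodule R (AuslanderTranspose d) :=
  (LinearMap.ker d).dualAnnihilator.map (mk d)

lemma mk_mem_extSubmodule_iff {d : P₁ →ₗ[R] P₀} {φ : Module.Dual R P₁} :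
    mk d φ ∈ extSubmodule d ↔ ∀ x, d x = 0 → φ x = 0 := by
  rw [extSubmodule, ← Submodule.mem_comap, Submodule.comap_map_mkQ,
    sup_eq_right.2 d.range_dualMap_le_dualAnnihilator_ker, Submodule.mem_dualAnnihilator]
  rfl

lemma map_mem_extSubmodule {d : P₁ →ₗ[R] P₀} {d' : P₁' →ₗ[R] P₀'} {f₁ : P₁ →ₗ[R] P₁'}
    {f₀ : P₀ →ₗ[R] P₀'} (h : d' ∘ₗ f₁ = f₀ ∘ₗ d) {t : AuslanderTranspose d'}
    (ht : t ∈ extSubmodule d') : map f₁ f₀ h t ∈ extSubmodule d := by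
  obtain ⟨φ, rfl⟩ := Submodule.mkQ_surjective _ t
  rw [mk_mem_extSubmodule_iff] at ht
  rw [map_mk, mk_mem_extSubmodule_iff]
  intro x hx
  exact ht _ (by simpa [hx] using LinearMap.congr_fun h x)

lemma map_map {d : P₁ →ₗ[R] P₀} {d' : P₁' →ₗ[R] P₀'} {d'' : P₁'' →ₗ[R] P₀''}
    {f₁ : P₁ →ₗ[R] P₁'} {f₀ : P₀ →ₗ[R] P₀'} {g₁ : P₁' →ₗ[R] P₁''} {g₀ : P₀' →ₗ[R] P₀''}
    (hf : d' ∘ₗ f₁ = f₀ ∘ₗ d) (hg : d'' ∘ₗ g₁ = g₀ ∘ₗ d') (t : AuslanderTranspose d'') :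
    map f₁ f₀ hf (map g₁ g₀ hg t) = map (g₁ ∘ₗ f₁) (g₀ ∘ₗ f₀)
      (by rw [← LinearMap.comp_assoc, hg, LinearMap.comp_assoc, hf, LinearMap.comp_assoc]) t := by
  obtain ⟨φ, rfl⟩ := Submodule.mkQ_surjective _ t
  rfl

lemma map_id {d : P₁ →ₗ[R] P₀} (t : AuslanderTranspose d) :
    map LinearMap.id LinearMap.id (d' := d) rfl t = t := by
  obtain ⟨φ, rfl⟩ := Submodule.mkQ_surjective _ t
  rfl

lemma map_eq_map_of_mem_extSubmodule [Module.Projective R P₀] {d : P₁ →ₗ[R] P₀}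
    {d' : P₁' →ₗ[R] P₀'} {ε' : P₀' →ₗ[R] M} (hd' : Function.Exact d' ε')
    {f₁ g₁ : P₁ →ₗ[R] P₁'} {f₀ g₀ : P₀ →ₗ[R] P₀'} (hf : d' ∘ₗ f₁ = f₀ ∘ₗ d)
    (hg : d' ∘ₗ g₁ = g₀ ∘ₗ d) (hfg : ε' ∘ₗ f₀ = ε' ∘ₗ g₀) {t : AuslanderTranspose d'}
    (ht : t ∈ extSubmodule d') : map f₁ f₀ hf t = map g₁ g₀ hg t := by
  obtain ⟨φ, rfl⟩ := Submodule.mkQ_surjective _ t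
  rw [mk_mem_extSubmodule_iff] at ht
  obtain ⟨k, hk⟩ : ∃ k : P₀ →ₗ[R] P₁', d' ∘ₗ k = f₀ - g₀ := by
    refine exists_comp_eq_of_range_le_range d' (f₀ - g₀) ?_
    rw [← hd'.linearMap_ker_eq, LinearMap.range_le_ker_iff, LinearMap.comp_sub, hfg, sub_self]
  -- `k` is a homotopy up to a map into `ker d'`, which `φ` does not see
  refine mk_eq_mk_iff.2 ⟨φ ∘ₗ k, LinearMap.ext fun x => ?_⟩
  have d'_eq_zero : d' (f₁ x - g₁ x - k (d x)) = 0 := by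
    have hfx : d' (f₁ x) = f₀ (d x) := LinearMap.congr_fun hf x
    have hgx : d' (g₁ x) = g₀ (d x) := LinearMap.congr_fun hg x
    have hkx : d' (k (d x)) = f₀ (d x) - g₀ (d x) := LinearMap.congr_fun hk (d x)
    rw [map_sub, map_sub, hfx, hgx, hkx, sub_self]
  have φ_eq := ht _ d'_eq_zero
  rw [map_sub, map_sub, sub_eq_zero] at φ_eq
  exact φ_eq.symm

lemma map_map_eq_self [Module.Projective R P₀']
    {d : P₁ →ₗ[R] P₀} {ε : P₀ →ₗ[R] M} {d' : P₁' →ₗ[R] P₀'} {ε' : P₀' →ₗ[R] M}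
    (hd' : Function.Exact d' ε')
    {f₁ : P₁ →ₗ[R] P₁'} {f₀ : P₀ →ₗ[R] P₀'} (hf : d' ∘ₗ f₁ = f₀ ∘ₗ d) (hεf : ε' ∘ₗ f₀ = ε)
    {g₁ : P₁' →ₗ[R] P₁} {g₀ : P₀' →ₗ[R] P₀} (hg : d ∘ₗ g₁ = g₀ ∘ₗ d') (hεg : ε ∘ₗ g₀ = ε')
    {t : AuslanderTranspose d'} (ht : t ∈ extSubmodule d') :
    map g₁ g₀ hg (map f₁ f₀ hf t) = t := by
  have lifts_id : ε' ∘ₗ f₀ ∘ₗ g₀ = ε' ∘ₗ LinearMap.id := by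
    rw [← LinearMap.comp_assoc, hεf, hεg, LinearMap.comp_id]
  rw [map_map, map_eq_map_of_mem_extSubmodule (d := d') (g₁ := .id) (g₀ := .id) hd' _ rfl lifts_id
    ht, map_id]

lemma exists_lift_id [Module.Projective R P₀] [Module.Projective R P₁]
    {d : P₁ →ₗ[R] P₀} {ε : P₀ →ₗ[R] M} {d' : P₁' →ₗ[R] P₀'} {ε' : P₀' →ₗ[R] M}
    (hd : ε ∘ₗ d = 0) (hd' : Function.Exact d' ε') (hε' : Function.Surjective ε') :
    ∃ (f₁ : P₁ →ₗ[R] P₁') (f₀ : P₀ →ₗ[R] P₀'), d' ∘ₗ f₁ = f₀ ∘ₗ d ∧ ε' ∘ₗ f₀ = ε := by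
  obtain ⟨f₀, hf₀⟩ := Module.projective_lifting_property ε' ε hε'
  obtain ⟨f₁, hf₁⟩ := exists_comp_eq_of_range_le_range d' (f₀ ∘ₗ d) <| by
    rw [← hd'.linearMap_ker_eq, LinearMap.range_le_ker_iff, ← LinearMap.comp_assoc, hf₀, hd]
  exact ⟨f₁, f₀, hf₁, hf₀⟩

lemma nonempty_extSubmodule_equiv [Module.Projective R P₀] [Module.Projective R P₁]
    [Module.Projective R P₀'] [Module.Projective R P₁']
    {d : P₁ →ₗ[R] P₀} {ε : P₀ →ₗ[R] M} {d' : P₁' →ₗ[R] P₀'} {ε' : P₀' →ₗ[R] M}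
    (hd : Function.Exact d ε) (hε : Function.Surjective ε)
    (hd' : Function.Exact d' ε') (hε' : Function.Surjective ε') :
    Nonempty (extSubmodule d ≃ₗ[R] extSubmodule d') := by
  obtain ⟨f₁, f₀, hf, hεf⟩ := exists_lift_id hd.linearMap_comp_eq_zero hd' hε'
  obtain ⟨g₁, g₀, hg, hεg⟩ := exists_lift_id hd'.linearMap_comp_eq_zero hd hε
  refine ⟨.ofLinearMap ((map g₁ g₀ hg).restrict fun _ => map_mem_extSubmodule hg)
    ((map f₁ f₀ hf).restrict fun _ => map_mem_extSubmodule hf) ?_ ?_⟩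
  · ext ⟨t, ht⟩ : 2
    exact map_map_eq_self hd' hf hεf hg hεg ht
  · ext ⟨t, ht⟩ : 2
    exact map_map_eq_self hd hg hεg hf hεf ht

lemma nonempty_homology_equiv_extSubmodule (S : ShortComplex (ModuleCat R))
    (d : P₁ →ₗ[R] P₀) (e : S.X₂ ≃ₗ[R] Module.Dual R P₁)
    (hg : LinearMap.ker S.g.hom = (LinearMap.ker d).dualAnnihilator.comap e.toLinearMap)
    (hf : LinearMap.range S.f.hom = (LinearMap.range d.dualMap).comap e.toLinearMap) :
    Nonempty (S.homology ≃ₗ[R] extSubmodule d) := by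
  let θ : LinearMap.ker S.g.hom →ₗ[R] AuslanderTranspose d :=
    mk d ∘ₗ e.toLinearMap ∘ₗ (LinearMap.ker S.g.hom).subtype
  have ker_θ : LinearMap.range S.moduleCatToCycles = LinearMap.ker θ := by
    refine (LinearMap.range_codRestrict _ _ _).trans ?_
    rw [hf]
    simp only [θ, LinearMap.ker_comp, Submodule.ker_mkQ, Submodule.comap_comp]
  have range_θ : LinearMap.range θ = extSubmodule d := by
    rw [LinearMap.range_comp, LinearMap.range_comp, Submodule.range_subtype, hg,
      Submodule.map_comap_eq_of_surjective e.surjective, extSubmodule]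
  exact ⟨S.moduleCatHomologyIso.toLinearEquiv ≪≫ₗ Submodule.quotEquivOfEq _ _ ker_θ ≪≫ₗ
    θ.quotKerEquivRange ≪≫ₗ LinearEquiv.ofEq _ _ range_θ⟩

end Ext

section Extension

variable {F N : Type*} [AddCommGroup F] [Module R F] [AddCommGroup N] [Module R N]
  {d : P₁ →ₗ[R] P₀} {ε : P₀ →ₗ[R] N}

/-- Restriction of functionals from `P₁ × F` to `P₁`, as a map from the transpose of
`coker (d, s)` to the transpose of `coker d`. -/
def mapInl (d : P₁ →ₗ[R] P₀) (s : F →ₗ[R] P₀) :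
    AuslanderTranspose (d.coprod s) →ₗ[R] AuslanderTranspose d :=
  map (LinearMap.inl R P₁ F) LinearMap.id (LinearMap.coprod_inl d s)

lemma mapInl_surjective (d : P₁ →ₗ[R] P₀) (s : F →ₗ[R] P₀) :
    Function.Surjective (mapInl d s) := by
  intro t
  obtain ⟨φ, rfl⟩ := Submodule.mkQ_surjective _ t
  exact ⟨mk _ (φ ∘ₗ LinearMap.fst R P₁ F), rfl⟩

lemma ker_mapInl (hd : ε ∘ₗ d = 0) {s : F →ₗ[R] P₀} (hs : Function.Injective (ε ∘ₗ s))
    (hext : extSubmodule d = ⊥) :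
    LinearMap.ker (mapInl d s) = extSubmodule (d.coprod s) := by
  have ker_coprod (x : P₁ × F) (hx : d.coprod s x = 0) : d x.1 = 0 ∧ x.2 = 0 := by
    obtain ⟨p, y⟩ := x
    rw [LinearMap.coprod_apply] at hx
    have hdp : ε (d p) = 0 := LinearMap.congr_fun hd p
    have hy : y = 0 := (map_eq_zero_iff _ hs).1 <| by simpa [hdp] using congrArg ε hx
    exact ⟨by simpa [hy] using hx, hy⟩
  ext t
  obtain ⟨φ, rfl⟩ := Submodule.mkQ_surjective _ t
  rw [LinearMap.mem_ker, mk_mem_extSubmodule_iff, mapInl, map_mk, ← Submodule.mem_bot R, ← hext,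
    mk_mem_extSubmodule_iff]
  constructor
  · rintro h ⟨p, y⟩ hx
    obtain ⟨hp, rfl⟩ := ker_coprod _ hx
    exact h p hp
  · intro h p hp
    exact h (p, 0) (by simpa using hp)

end Extension
end AuslanderTranspose
end Transpose

section ExtMod

variable {R : Type u} [CommRing R]

namespace AuslanderTranspose

lemma nonempty_linearYonedaObj_homology_equiv_extSubmodule (C : ChainComplex (ModuleCat R) ℕ)
    (hC : Function.Exact (C.d 2 1).hom (C.d 1 0).hom) :
    Nonempty ((C.linearYonedaObj R (ModuleCat.of R R)).homology 1 ≃ₗ[R]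
      extSubmodule (C.d 1 0).hom) := by
  let K := C.linearYonedaObj R (ModuleCat.of R R)
  let S := K.sc' 0 1 2
  let e : S.X₂ ≃ₗ[R] Module.Dual R (C.X 1) :=
    ModuleCat.homLinearEquiv (S := R) (M := C.X 1) (N := ModuleCat.of R R)
  have ker_g : LinearMap.ker S.g.hom =
      (LinearMap.ker (C.d 1 0).hom).dualAnnihilator.comap e.toLinearMap := by
    ext φ
    change C.X 1 ⟶ ModuleCat.of R R at φ
    suffices C.d 2 1 ≫ φ = 0 ↔ ∀ x, (C.d 1 0).hom x = 0 → φ.hom x = 0 from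
      this.trans (Submodule.mem_dualAnnihilator (W := LinearMap.ker (C.d 1 0).hom) φ.hom).symm
    simp only [hC _, Set.forall_mem_range]
    exact ⟨fun h y => congrArg (fun ψ => ψ.hom y) h,
      fun h => ModuleCat.hom_ext (LinearMap.ext h)⟩
  have range_f : LinearMap.range S.f.hom =
      (LinearMap.range (C.d 1 0).hom.dualMap).comap e.toLinearMap := by
    ext φ
    change C.X 1 ⟶ ModuleCat.of R R at φ
    constructor
    · rintro ⟨a, rfl⟩
      change C.X 0 ⟶ ModuleCat.of R R at a
      exact ⟨a.hom, rfl⟩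
    · rintro ⟨a, ha⟩
      exact ⟨(ModuleCat.ofHom a : C.X 0 ⟶ ModuleCat.of R R), ModuleCat.hom_ext ha⟩
  obtain ⟨e'⟩ := nonempty_homology_equiv_extSubmodule S (C.d 1 0).hom e ker_g range_f
  exact ⟨(ShortComplex.homologyMapIso (K.isoSc' 0 1 2 (by simp) (by simp))).toLinearEquiv ≪≫ₗ e'⟩

lemma nonempty_extMod_one_equiv_extSubmodule {M : Type u} [AddCommGroup M] [Module R M]
    {P₀ P₁ : Type*} [AddCommGroup P₀] [Module R P₀] [Module.Projective R P₀]
    [AddCommGroup P₁] [Module R P₁] [Module.Projective R P₁]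
    {d : P₁ →ₗ[R] P₀} {ε : P₀ →ₗ[R] M} (hd : Function.Exact d ε) (hε : Function.Surjective ε) :
    Nonempty (ExtMod R 1 M R ≃ₗ[R] extSubmodule d) := by
  let P := projectiveResolution (ModuleCat.of R M)
  have projective_X (n : ℕ) : Module.Projective R (P.complex.X n) :=
    (IsProjective.iff_projective _).2 (P.projective n)
  have exact_d : Function.Exact (P.complex.d 2 1).hom (P.complex.d 1 0).hom :=
    (ShortComplex.ShortExact.moduleCat_exact_iff_function_exact _).1 (P.exact_succ 0)
  have exact_π : Function.Exact (P.complex.d 1 0).hom (P.π.f 0).hom :=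
    (ShortComplex.ShortExact.moduleCat_exact_iff_function_exact _).1 P.exact₀
  have π_surjective : Function.Surjective (P.π.f 0).hom :=
    (ModuleCat.epi_iff_surjective _).1 inferInstance
  obtain ⟨e⟩ := nonempty_linearYonedaObj_homology_equiv_extSubmodule P.complex exact_d
  obtain ⟨e'⟩ := nonempty_extSubmodule_equiv exact_π π_surjective hd hε
  exact ⟨(P.isoExt (R := R) 1 (ModuleCat.of R R)).toLinearEquiv ≪≫ₗ e ≪≫ₗ e'⟩

lemma extSubmodule_eq_bot {M : Type u} [AddCommGroup M] [Module R M] {P₀ P₁ : Type*}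
    [AddCommGroup P₀] [Module R P₀] [Module.Projective R P₀]
    [AddCommGroup P₁] [Module R P₁] [Module.Projective R P₁]
    [Subsingleton (ExtMod R 1 M R)] {d : P₁ →ₗ[R] P₀} {ε : P₀ →ₗ[R] M}
    (hd : Function.Exact d ε) (hε : Function.Surjective ε) :
    extSubmodule d = ⊥ := by
  obtain ⟨e⟩ := nonempty_extMod_one_equiv_extSubmodule hd hε
  have : Subsingleton (extSubmodule d) := e.symm.toEquiv.subsingleton
  exact Submodule.eq_bot_of_subsingleton

end AuslanderTranspose
end ExtMod

open AuslanderTranspose in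
theorem transpose_short_exact_sequence_general {R : Type u} [CommRing R] {M N : Type u}
    [AddCommGroup M] [Module R M] [AddCommGroup N] [Module R N]
    {F P₀ P₁ Q₀ Q₁ : Type*} [AddCommGroup F] [Module R F] [Module.Projective R F]
    [AddCommGroup P₀] [Module R P₀] [Module.Projective R P₀]
    [AddCommGroup P₁] [Module R P₁] [Module.Projective R P₁]
    [AddCommGroup Q₀] [Module R Q₀] [Module.Projective R Q₀]
    [AddCommGroup Q₁] [Module R Q₁] [Module.Projective R Q₁]
    {ι : F →ₗ[R] N} {f : N →ₗ[R] M} (hι : Function.Injective ι) (hf : Function.Surjective f)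
    (hιf : Function.Exact ι f) [Subsingleton (ExtMod R 1 N R)]
    {dM : P₁ →ₗ[R] P₀} {εM : P₀ →ₗ[R] M} (hdM : Function.Exact dM εM)
    (hεM : Function.Surjective εM)
    {dN : Q₁ →ₗ[R] Q₀} {εN : Q₀ →ₗ[R] N} (hdN : Function.Exact dN εN)
    (hεN : Function.Surjective εN) :
    ∃ (α : ExtMod R 1 M R →ₗ[R] AuslanderTranspose dM × Module.Dual R ((Q₁ × F) × P₀))
      (β : AuslanderTranspose dM × Module.Dual R ((Q₁ × F) × P₀) →ₗ[R]
        AuslanderTranspose dN × Module.Dual R (P₁ × Q₀)),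
      Function.Injective α ∧ Function.Surjective β ∧ Function.Exact α β := by
  obtain ⟨s, rfl⟩ := Module.projective_lifting_property εN ι hεN
  have hD : Function.Exact (dN.coprod s) (f ∘ₗ εN) := exact_coprod_comp hdN hιf
  have hε : Function.Surjective (f ∘ₗ εN) := hf.comp hεN
  have ker_eq : LinearMap.ker (mapInl dN s) = extSubmodule (dN.coprod s) :=
    ker_mapInl hdN.linearMap_comp_eq_zero hι (extSubmodule_eq_bot hdN hεN)
  obtain ⟨e⟩ := nonempty_extMod_one_equiv_extSubmodule hD hε
  obtain ⟨E⟩ := nonempty_prod_dual_equiv hdM hεM hD hε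
  let α := LinearMap.inl R _ (Module.Dual R (P₁ × Q₀)) ∘ₗ (extSubmodule (dN.coprod s)).subtype
  let β := (mapInl dN s).prodMap (LinearMap.id : Module.Dual R (P₁ × Q₀) →ₗ[R] _)
  have exact_αβ : Function.Exact α β := LinearMap.exact_iff.2 <| by
    rw [LinearMap.ker_prodMap, ker_eq, LinearMap.ker_id, LinearMap.range_comp,
      Submodule.range_subtype, Submodule.map_inl]
  exact ⟨_, _, shortExact_conj_linearEquiv
    (LinearMap.inl_injective.comp (Submodule.subtype_injective _))
    ((mapInl_surjective dN s).prodMap Function.surjective_id) exact_αβ e E.symm (.refl R _)⟩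

/-- Let `R` be a commutative noetherian ring and `0 → F → N → M → 0` a short exact sequence of
finitely generated `R`-modules with `F` finitely generated free, and suppose
`Ext_R^1(N, R) = 0`.  Given finite free presentations `P₁ → P₀ → M → 0` and
`Q₁ → Q₀ → N → 0`, with transposes `Tr M = coker(P₀* → P₁*)` and `Tr N = coker(Q₀* → Q₁*)`,
there exist finitely generated free modules `G`, `G'` and a short exact sequence
`0 → Ext_R^1(M, R) → Tr M ⊕ G → Tr N ⊕ G' → 0`. -/
theorem transpose_short_exact_sequence (R : Type u) [CommRing R] [IsNoetherianRing R]
    (M N : Type u) [AddCommGroup M] [Module R M] [AddCommGroup N] [Module R N]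
    [Module.Finite R M] [Module.Finite R N]
    -- the short exact sequence `0 → F → N → M → 0` with `F = R^r` finitely generated free
    (r : ℕ) (ι : (Fin r → R) →ₗ[R] N) (f : N →ₗ[R] M)
    (hι : Function.Injective ι) (hf : Function.Surjective f)
    (hexact : LinearMap.range ι = LinearMap.ker f)
    -- the vanishing `Ext_R^1(N, R) = 0`
    (hN : Subsingleton (ExtMod R 1 N R))
    -- a finite free presentation `P₁ → P₀ → M → 0` of `M`
    (p₀ p₁ : ℕ) (dM : (Fin p₁ → R) →ₗ[R] (Fin p₀ → R)) (εM : (Fin p₀ → R) →ₗ[R] M)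
    (hεM : Function.Surjective εM) (hdM : LinearMap.range dM = LinearMap.ker εM)
    -- a finite free presentation `Q₁ → Q₀ → N → 0` of `N`
    (q₀ q₁ : ℕ) (dN : (Fin q₁ → R) →ₗ[R] (Fin q₀ → R)) (εN : (Fin q₀ → R) →ₗ[R] N)
    (hεN : Function.Surjective εN) (hdN : LinearMap.range dN = LinearMap.ker εN) :
    ∃ (g g' : ℕ)
      (α : ExtMod R 1 M R →ₗ[R]
        ((Module.Dual R (Fin p₁ → R) ⧸ LinearMap.range dM.dualMap) × (Fin g → R)))
      (β : ((Module.Dual R (Fin p₁ → R) ⧸ LinearMap.range dM.dualMap) × (Fin g → R)) →ₗ[R]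
        ((Module.Dual R (Fin q₁ → R) ⧸ LinearMap.range dN.dualMap) × (Fin g' → R))),
      Function.Injective α ∧ Function.Surjective β ∧ LinearMap.range α = LinearMap.ker β := by
  obtain ⟨α, β, hα, hβ, hαβ⟩ := transpose_short_exact_sequence_general hι hf
    (LinearMap.exact_iff.2 hexact.symm) (LinearMap.exact_iff.2 hdM.symm) hεM
    (LinearMap.exact_iff.2 hdN.symm) hεN
  simpa only [LinearMap.exact_iff, eq_comm] using exists_shortExact_prod_fin_fun hα hβ hαβ
end
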